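/- Let φ : ℝ → ℝ be smooth with 0 ≤ φ ≤ 1, φ supported in {x : x ≥ α + β/4}, φ(x) = 1 for x ≥ α + β/2, and φ' ≥ 0. Then for every ε > 0 there exist constants C > 0 (depending on ε, φ, α, β) such that for every real Dirichlet quasimode datum (u, λ, f) on the stadium S, | ∫_{∂S ∩ W} φ(x) (∂_x u)(∂_N u) dl | ≤ C λ² ‖u‖²_{L²(W)} + C ‖f‖²_{L²(S)} + ε ∫_S (∂_x u)² dA, where ‖u‖_{L²(W)} is the L² norm of u over the wings W. -/

import Mathlib

open MeasureTheory Real Set Filter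

noncomputable section

/-- Partial derivative in the first (x) variable. -/
def pdx (u : ℝ × ℝ → ℝ) (p : ℝ × ℝ) : ℝ := deriv (fun t => u (t, p.2)) p.1

/-- Partial derivative in the second (y) variable. -/
def pdy (u : ℝ × ℝ → ℝ) (p : ℝ × ℝ) : ℝ := deriv (fun t => u (p.1, t)) p.2

/-- The positive Laplacian `Δu = -u_xx - u_yy`. -/
def lap (u : ℝ × ℝ → ℝ) (p : ℝ × ℝ) : ℝ := -(pdx (pdx u) p) - (pdy (pdy u) p)

/-- The central rectangle `R = [-α,α] × [-β,β]`. -/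
def Rect (α β : ℝ) : Set (ℝ × ℝ) := Icc (-α) α ×ˢ Icc (-β) β

/-- The wings `W = W₊ ∪ W₋`, two half-discs of radius β centered at `(±α, 0)`. -/
def Wings (α β : ℝ) : Set (ℝ × ℝ) :=
  {p | (p.1 - α) ^ 2 + p.2 ^ 2 ≤ β ^ 2 ∧ α ≤ p.1} ∪
  {p | (p.1 + α) ^ 2 + p.2 ^ 2 ≤ β ^ 2 ∧ p.1 ≤ -α}

/-- The Bunimovich stadium `S = R ∪ W`. -/
def Stadium (α β : ℝ) : Set (ℝ × ℝ) := Rect α β ∪ Wings α β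

/-- The boundary `∂S`: two horizontal segments and two semicircles. -/
def StadiumBoundary (α β : ℝ) : Set (ℝ × ℝ) :=
  {p | |p.1| ≤ α ∧ (p.2 = β ∨ p.2 = -β)} ∪
  {p | (|p.1| - α) ^ 2 + p.2 ^ 2 = β ^ 2 ∧ α ≤ |p.1|}

/-- Boundary integral `∫_{∂S} g dl` of an integrand `g` depending on the boundary point
and the outward unit normal at that point. -/
def bdryInt (α β : ℝ) (g : ℝ × ℝ → ℝ × ℝ → ℝ) : ℝ :=
  (∫ x in (-α)..α, (g (x, β) (0, 1) + g (x, -β) (0, -1))) +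
  β * ∫ θ in (-(π / 2))..(π / 2),
    (g (α + β * cos θ, β * sin θ) (cos θ, sin θ) +
     g (-(α + β * cos θ), β * sin θ) (-cos θ, sin θ))

/-- Boundary integral `∫_{∂S ∩ W} g dl` over the two semicircles only. -/
def bdryIntW (α β : ℝ) (g : ℝ × ℝ → ℝ × ℝ → ℝ) : ℝ :=
  β * ∫ θ in (-(π / 2))..(π / 2),
    (g (α + β * cos θ, β * sin θ) (cos θ, sin θ) +
     g (-(α + β * cos θ), β * sin θ) (-cos θ, sin θ))

/-- The normal derivative `∂_N u = n₁ ∂_x u + n₂ ∂_y u` at a boundary point `p`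
with outward unit normal `n`. -/
def nderiv (u : ℝ × ℝ → ℝ) (p n : ℝ × ℝ) : ℝ := n.1 * pdx u p + n.2 * pdy u p

/-- A real Dirichlet quasimode datum `(u, λ, f)` on the stadium: `λ > 0`, `u` smooth on a
neighborhood of `S`, `u = 0` on `∂S`, and `(Δ - λ²) u = f` on `S`. -/
structure QMDatum (α β : ℝ) where
  u : ℝ × ℝ → ℝ
  lam : ℝ
  f : ℝ × ℝ → ℝ
  lam_pos : 0 < lam
  smooth : ∃ V : Set (ℝ × ℝ), IsOpen V ∧ Stadium α β ⊆ V ∧ ContDiffOn ℝ (⊤ : ℕ∞) u V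
  dirichlet : ∀ p ∈ StadiumBoundary α β, u p = 0
  eqn : ∀ p ∈ Stadium α β, lap u p - lam ^ 2 * u p = f p


lemma slice_x {V : Set (ℝ × ℝ)} (hV : IsOpen V) {G : ℝ × ℝ → ℝ}
    (hG : ContDiffOn ℝ (⊤ : ℕ∞) G V) {p : ℝ × ℝ} (hp : p ∈ V) :
    HasDerivAt (fun t => G (t, p.2)) (fderiv ℝ G p (1, 0)) p.1 := by
  have h1 : HasFDerivAt G (fderiv ℝ G p) p :=
    ((hG.contDiffAt (hV.mem_nhds hp)).differentiableAt (by simp)).hasFDerivAt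
  have h2 : HasDerivAt (fun t : ℝ => (t, p.2)) ((1 : ℝ), (0 : ℝ)) p.1 :=
    (hasDerivAt_id p.1).prodMk (hasDerivAt_const _ _)
  exact HasFDerivAt.comp_hasDerivAt (f := fun t : ℝ => (t, p.2)) p.1 h1 h2

lemma slice_y {V : Set (ℝ × ℝ)} (hV : IsOpen V) {G : ℝ × ℝ → ℝ}
    (hG : ContDiffOn ℝ (⊤ : ℕ∞) G V) {p : ℝ × ℝ} (hp : p ∈ V) :
    HasDerivAt (fun t => G (p.1, t)) (fderiv ℝ G p (0, 1)) p.2 := by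
  have h1 : HasFDerivAt G (fderiv ℝ G p) p :=
    ((hG.contDiffAt (hV.mem_nhds hp)).differentiableAt (by simp)).hasFDerivAt
  have h2 : HasDerivAt (fun t : ℝ => (p.1, t)) ((0 : ℝ), (1 : ℝ)) p.2 :=
    (hasDerivAt_const _ _).prodMk (hasDerivAt_id p.2)
  exact HasFDerivAt.comp_hasDerivAt (f := fun t : ℝ => (p.1, t)) p.2 h1 h2

lemma pdx_eq {V : Set (ℝ × ℝ)} (hV : IsOpen V) {G : ℝ × ℝ → ℝ}
    (hG : ContDiffOn ℝ (⊤ : ℕ∞) G V) {p : ℝ × ℝ} (hp : p ∈ V) :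
    pdx G p = fderiv ℝ G p (1, 0) := (slice_x hV hG hp).deriv

lemma pdy_eq {V : Set (ℝ × ℝ)} (hV : IsOpen V) {G : ℝ × ℝ → ℝ}
    (hG : ContDiffOn ℝ (⊤ : ℕ∞) G V) {p : ℝ × ℝ} (hp : p ∈ V) :
    pdy G p = fderiv ℝ G p (0, 1) := (slice_y hV hG hp).deriv

lemma hasx {V : Set (ℝ × ℝ)} (hV : IsOpen V) {G : ℝ × ℝ → ℝ}
    (hG : ContDiffOn ℝ (⊤ : ℕ∞) G V) {p : ℝ × ℝ} (hp : p ∈ V) :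
    HasDerivAt (fun t => G (t, p.2)) (pdx G p) p.1 := by
  rw [pdx_eq hV hG hp]; exact slice_x hV hG hp

lemma hasy {V : Set (ℝ × ℝ)} (hV : IsOpen V) {G : ℝ × ℝ → ℝ}
    (hG : ContDiffOn ℝ (⊤ : ℕ∞) G V) {p : ℝ × ℝ} (hp : p ∈ V) :
    HasDerivAt (fun t => G (p.1, t)) (pdy G p) p.2 := by
  rw [pdy_eq hV hG hp]; exact slice_y hV hG hp

lemma smooth_fd {V : Set (ℝ × ℝ)} (hV : IsOpen V) {G : ℝ × ℝ → ℝ}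
    (hG : ContDiffOn ℝ (⊤ : ℕ∞) G V) (v : ℝ × ℝ) :
    ContDiffOn ℝ (⊤ : ℕ∞) (fun p => fderiv ℝ G p v) V :=
  (hG.fderiv_of_isOpen hV (by simp)).clm_apply contDiffOn_const

lemma smooth_pdx {V : Set (ℝ × ℝ)} (hV : IsOpen V) {G : ℝ × ℝ → ℝ}
    (hG : ContDiffOn ℝ (⊤ : ℕ∞) G V) : ContDiffOn ℝ (⊤ : ℕ∞) (pdx G) V :=
  (smooth_fd hV hG (1, 0)).congr fun _ hp => pdx_eq hV hG hp

lemma smooth_pdy {V : Set (ℝ × ℝ)} (hV : IsOpen V) {G : ℝ × ℝ → ℝ}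
    (hG : ContDiffOn ℝ (⊤ : ℕ∞) G V) : ContDiffOn ℝ (⊤ : ℕ∞) (pdy G) V :=
  (smooth_fd hV hG (0, 1)).congr fun _ hp => pdy_eq hV hG hp

lemma pd_comm {V : Set (ℝ × ℝ)} (hV : IsOpen V) {G : ℝ × ℝ → ℝ}
    (hG : ContDiffOn ℝ (⊤ : ℕ∞) G V) {p : ℝ × ℝ} (hp : p ∈ V) :
    pdx (pdy G) p = pdy (pdx G) p := by
  rw [pdx_eq hV (smooth_pdy hV hG) hp, pdy_eq hV (smooth_pdx hV hG) hp]
  have hGp := hG.contDiffAt (hV.mem_nhds hp)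
  have e1 : pdy G =ᶠ[nhds p] fun q => fderiv ℝ G q (0, 1) := by
    filter_upwards [hV.mem_nhds hp] with q hq using pdy_eq hV hG hq
  have e2 : pdx G =ᶠ[nhds p] fun q => fderiv ℝ G q (1, 0) := by
    filter_upwards [hV.mem_nhds hp] with q hq using pdx_eq hV hG hq
  rw [e1.fderiv_eq, e2.fderiv_eq]
  have hd : DifferentiableAt ℝ (fderiv ℝ G) p :=
    ((hG.fderiv_of_isOpen hV (m := (⊤ : ℕ∞)) (by simp)).contDiffAt
      (hV.mem_nhds hp)).differentiableAt (by simp)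
  have hs : IsSymmSndFDerivAt ℝ G p := hGp.isSymmSndFDerivAt (by
    simp only [minSmoothness_of_isRCLikeNormedField]; exact WithTop.coe_le_coe.2 (show (2 : ℕ∞) ≤ ⊤ from le_top))
  rw [fderiv_clm_apply hd (by fun_prop), fderiv_clm_apply hd (by fun_prop)]
  simpa using hs (1, 0) (0, 1)

lemma mem_stadium {α β : ℝ} (hα : 0 < α) (hβ : 0 < β) (x y : ℝ) :
    (x, y) ∈ Stadium α β ↔ |y| ≤ β ∧ (|x| ≤ α ∨ (|x| - α) ^ 2 + y ^ 2 ≤ β ^ 2) := by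
  simp only [Stadium, Rect, Wings, mem_union, mem_prod, mem_Icc, mem_ofPred_eq, ← abs_le]
  have key : ∀ z : ℝ, z ^ 2 + y ^ 2 ≤ β ^ 2 → |y| ≤ β := fun z hz =>
    abs_le_of_sq_le_sq (by nlinarith [sq_nonneg z]) hβ.le
  constructor
  · rintro (⟨h1, h2⟩ | ⟨h1, h2⟩ | ⟨h1, h2⟩)
    · exact ⟨h2, Or.inl h1⟩
    · refine ⟨key _ h1, Or.inr ?_⟩
      rwa [abs_of_nonneg (by linarith)]
    · refine ⟨key _ h1, Or.inr ?_⟩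
      rw [abs_of_nonpos (by linarith)]; nlinarith
  · rintro ⟨h1, h2 | h2⟩
    · exact Or.inl ⟨h2, h1⟩
    · by_cases hx : |x| ≤ α
      · exact Or.inl ⟨hx, h1⟩
      · right
        push Not at hx
        rcases le_total 0 x with h0 | h0
        · rw [abs_of_nonneg h0] at hx h2
          exact Or.inl ⟨h2, hx.le⟩
        · rw [abs_of_nonpos h0] at hx h2
          exact Or.inr ⟨by nlinarith, by linarith⟩

lemma mem_stadium_x {α β : ℝ} (hα : 0 < α) (hβ : 0 < β) (x y : ℝ) :
    (x, y) ∈ Stadium α β ↔ y ∈ Icc (-β) β ∧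
      x ∈ Icc (-(α + √(β ^ 2 - y ^ 2))) (α + √(β ^ 2 - y ^ 2)) := by
  rw [mem_stadium hα hβ, mem_Icc, mem_Icc, ← abs_le, ← abs_le]
  refine and_congr_right fun hy => ?_
  have hs := Real.sqrt_nonneg (β ^ 2 - y ^ 2)
  constructor
  · rintro (h | h)
    · linarith
    · have := Real.abs_le_sqrt (show (|x| - α) ^ 2 ≤ β ^ 2 - y ^ 2 by linarith)
      linarith [le_abs_self (|x| - α)]
  · intro h
    by_cases hx : |x| ≤ α
    · exact Or.inl hx
    · right
      push Not at hx
      have := Real.sq_sqrt (show 0 ≤ β ^ 2 - y ^ 2 by nlinarith [sq_abs y, abs_nonneg y])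
      nlinarith

/-- Half-height of the stadium. -/
def hgt (α β x : ℝ) : ℝ := √(β ^ 2 - (max (|x| - α) 0) ^ 2)

lemma mem_stadium_y {α β : ℝ} (hα : 0 < α) (hβ : 0 < β) (x y : ℝ) :
    (x, y) ∈ Stadium α β ↔ x ∈ Icc (-(α + β)) (α + β) ∧
      y ∈ Icc (-(hgt α β x)) (hgt α β x) := by
  rw [mem_stadium hα hβ, mem_Icc, mem_Icc, ← abs_le, ← abs_le, hgt]
  by_cases hx : |x| ≤ α
  · rw [max_eq_right (by linarith)]
    simp only [ne_eq, OfNat.ofNat_ne_zero, not_false_eq_true, zero_pow, sub_zero,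
      Real.sqrt_sq hβ.le, hx, true_or, and_true]
    constructor
    · intro h; exact ⟨by linarith, h⟩
    · intro h; exact h.2
  · push Not at hx
    rw [max_eq_left (by linarith)]
    constructor
    · rintro ⟨h1, h | h⟩
      · linarith
      · refine ⟨?_, Real.abs_le_sqrt (by linarith)⟩
        nlinarith [sq_nonneg y]
    · rintro ⟨h1, h⟩
      have h0 := Real.sq_sqrt (show 0 ≤ β ^ 2 - (|x| - α) ^ 2 by nlinarith)
      have h2 : y ^ 2 ≤ β ^ 2 - (|x| - α) ^ 2 := by
        rw [← h0, ← sq_abs y]; gcongr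
      exact ⟨abs_le_of_sq_le_sq (by nlinarith [sq_nonneg (|x| - α)]) hβ.le, Or.inr (by linarith)⟩

lemma stadium_compact {α β : ℝ} (hα : 0 < α) (hβ : 0 < β) : IsCompact (Stadium α β) := by
  have hc : IsClosed (Stadium α β) := by
    have : Stadium α β = {p | |p.2| ≤ β ∧ (|p.1| ≤ α ∨ (|p.1| - α) ^ 2 + p.2 ^ 2 ≤ β ^ 2)} := by
      ext ⟨x, y⟩; exact mem_stadium hα hβ x y
    rw [this]
    have h1 : IsClosed {p : ℝ × ℝ | |p.2| ≤ β} := isClosed_le (by fun_prop) (by fun_prop)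
    have h2 : IsClosed {p : ℝ × ℝ | |p.1| ≤ α} := isClosed_le (by fun_prop) (by fun_prop)
    have h3 : IsClosed {p : ℝ × ℝ | (|p.1| - α) ^ 2 + p.2 ^ 2 ≤ β ^ 2} :=
      isClosed_le (by fun_prop) (by fun_prop)
    exact h1.inter (h2.union h3)
  refine IsCompact.of_isClosed_subset
    ((isCompact_Icc (a := -(α + β)) (b := α + β)).prod (isCompact_Icc (a := -β) (b := β))) hc ?_
  rintro ⟨x, y⟩ h
  exact ⟨((mem_stadium_y hα hβ x y).1 h).1, ((mem_stadium_x hα hβ x y).1 h).1⟩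

lemma wings_meas (α β : ℝ) : MeasurableSet (Wings α β) := by
  have h1 : IsClosed {p : ℝ × ℝ | (p.1 - α) ^ 2 + p.2 ^ 2 ≤ β ^ 2} :=
    isClosed_le (by fun_prop) (by fun_prop)
  have h2 : IsClosed {p : ℝ × ℝ | α ≤ p.1} := isClosed_le (by fun_prop) (by fun_prop)
  have h3 : IsClosed {p : ℝ × ℝ | (p.1 + α) ^ 2 + p.2 ^ 2 ≤ β ^ 2} :=
    isClosed_le (by fun_prop) (by fun_prop)
  have h4 : IsClosed {p : ℝ × ℝ | p.1 ≤ -α} := isClosed_le (by fun_prop) (by fun_prop)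
  exact ((h1.inter h2).union (h3.inter h4)).measurableSet

lemma fubini_x {α β : ℝ} (hα : 0 < α) (hβ : 0 < β) {g : ℝ × ℝ → ℝ}
    (hg : ContinuousOn g (Stadium α β)) :
    ∫ p in Stadium α β, g p = ∫ y in (-β)..β,
      ∫ x in (-(α + √(β ^ 2 - y ^ 2)))..(α + √(β ^ 2 - y ^ 2)), g (x, y) := by
  have hS := stadium_compact hα hβ
  have hi : IntegrableOn g (Stadium α β) := hg.integrableOn_compact hS
  rw [← integral_indicator hS.measurableSet]
  rw [← integrable_indicator_iff hS.measurableSet] at hi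
  rw [Measure.volume_eq_prod] at hi ⊢
  rw [integral_prod_symm _ hi, intervalIntegral.integral_of_le (by linarith),
    ← integral_Icc_eq_integral_Ioc, ← integral_indicator measurableSet_Icc]
  congr 1
  ext y
  by_cases hy : y ∈ Icc (-β) β
  · have h0 := Real.sqrt_nonneg (β ^ 2 - y ^ 2)
    rw [indicator_of_mem hy, intervalIntegral.integral_of_le (by linarith),
      ← integral_Icc_eq_integral_Ioc, ← integral_indicator measurableSet_Icc]
    congr 1
    ext x
    simp only [indicator, mem_stadium_x hα hβ, hy, true_and]
  · rw [indicator_of_notMem hy]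
    simp only [indicator, mem_stadium_x hα hβ, hy, false_and, if_false, integral_zero]

lemma fubini_y {α β : ℝ} (hα : 0 < α) (hβ : 0 < β) {g : ℝ × ℝ → ℝ}
    (hg : ContinuousOn g (Stadium α β)) :
    ∫ p in Stadium α β, g p = ∫ x in (-(α + β))..(α + β),
      ∫ y in (-(hgt α β x))..(hgt α β x), g (x, y) := by
  have hS := stadium_compact hα hβ
  have hi : IntegrableOn g (Stadium α β) := hg.integrableOn_compact hS
  rw [← integral_indicator hS.measurableSet]
  rw [← integrable_indicator_iff hS.measurableSet] at hi
  rw [Measure.volume_eq_prod] at hi ⊢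
  rw [integral_prod _ hi, intervalIntegral.integral_of_le (by linarith),
    ← integral_Icc_eq_integral_Ioc, ← integral_indicator measurableSet_Icc]
  congr 1
  ext x
  by_cases hx : x ∈ Icc (-(α + β)) (α + β)
  · have h0 : 0 ≤ hgt α β x := Real.sqrt_nonneg _
    rw [indicator_of_mem hx, intervalIntegral.integral_of_le (by linarith),
      ← integral_Icc_eq_integral_Ioc, ← integral_indicator measurableSet_Icc]
    congr 1
    ext y
    simp only [indicator, mem_stadium_y hα hβ, hx, true_and]
  · rw [indicator_of_notMem hx]
    simp only [indicator, mem_stadium_y hα hβ, hx, false_and, if_false, integral_zero]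

lemma div_x {α β : ℝ} (hα : 0 < α) (hβ : 0 < β) {V : Set (ℝ × ℝ)} (hV : IsOpen V)
    (hSV : Stadium α β ⊆ V) {G : ℝ × ℝ → ℝ} (hG : ContDiffOn ℝ (⊤ : ℕ∞) G V) :
    ∫ p in Stadium α β, pdx G p = ∫ y in (-β)..β,
      (G (α + √(β ^ 2 - y ^ 2), y) - G (-(α + √(β ^ 2 - y ^ 2)), y)) := by
  have hc := (smooth_pdx hV hG).continuousOn.mono hSV
  rw [fubini_x hα hβ hc]
  refine intervalIntegral.integral_congr fun y hy => ?_
  rw [uIcc_of_le (by linarith)] at hy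
  have h0 := Real.sqrt_nonneg (β ^ 2 - y ^ 2)
  have hm : ∀ x ∈ uIcc (-(α + √(β ^ 2 - y ^ 2))) (α + √(β ^ 2 - y ^ 2)),
      (x, y) ∈ Stadium α β := fun x hx => by
    rw [uIcc_of_le (by linarith)] at hx
    exact (mem_stadium_x hα hβ x y).2 ⟨hy, hx⟩
  refine intervalIntegral.integral_eq_sub_of_hasDerivAt (f := fun x => G (x, y))
    (fun x hx => hasx hV hG (hSV (hm x hx))) ?_
  exact (hc.comp (by fun_prop) hm).intervalIntegrable

lemma div_y {α β : ℝ} (hα : 0 < α) (hβ : 0 < β) {V : Set (ℝ × ℝ)} (hV : IsOpen V)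
    (hSV : Stadium α β ⊆ V) {G : ℝ × ℝ → ℝ} (hG : ContDiffOn ℝ (⊤ : ℕ∞) G V) :
    ∫ p in Stadium α β, pdy G p = ∫ x in (-(α + β))..(α + β),
      (G (x, hgt α β x) - G (x, -(hgt α β x))) := by
  have hc := (smooth_pdy hV hG).continuousOn.mono hSV
  rw [fubini_y hα hβ hc]
  refine intervalIntegral.integral_congr fun x hx => ?_
  rw [uIcc_of_le (by linarith)] at hx
  have h0 : 0 ≤ hgt α β x := Real.sqrt_nonneg _
  have hm : ∀ y ∈ uIcc (-(hgt α β x)) (hgt α β x),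
      (x, y) ∈ Stadium α β := fun y hy => by
    rw [uIcc_of_le (by linarith)] at hy
    exact (mem_stadium_y hα hβ x y).2 ⟨hx, hy⟩
  refine intervalIntegral.integral_eq_sub_of_hasDerivAt (f := fun y => G (x, y))
    (fun y hy => hasy hV hG (hSV (hm y hy))) ?_
  exact (hc.comp (by fun_prop) hm).intervalIntegrable

lemma bdry_x {α β : ℝ} (hα : 0 < α) {y : ℝ} (hy : y ∈ Icc (-β) β) :
    (α + √(β ^ 2 - y ^ 2), y) ∈ StadiumBoundary α β ∧
    (-(α + √(β ^ 2 - y ^ 2)), y) ∈ StadiumBoundary α β := by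
  have h0 := Real.sqrt_nonneg (β ^ 2 - y ^ 2)
  have h1 := Real.sq_sqrt (show 0 ≤ β ^ 2 - y ^ 2 by nlinarith [hy.1, hy.2])
  refine ⟨Or.inr ?_, Or.inr ?_⟩
  · simp only [mem_ofPred_eq]
    rw [abs_of_nonneg (by linarith)]
    exact ⟨by nlinarith, by linarith⟩
  · simp only [mem_ofPred_eq, abs_neg]
    rw [abs_of_nonneg (by linarith)]
    exact ⟨by nlinarith, by linarith⟩

lemma bdry_y {α β : ℝ} (hβ : 0 < β) {x : ℝ} (hx : x ∈ Icc (-(α + β)) (α + β)) :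
    (x, hgt α β x) ∈ StadiumBoundary α β ∧ (x, -(hgt α β x)) ∈ StadiumBoundary α β := by
  have hx' := abs_le.2 hx
  unfold hgt
  by_cases h : |x| ≤ α
  · rw [max_eq_right (by linarith)]
    simp [Real.sqrt_sq hβ.le, StadiumBoundary, h]
  · push Not at h
    rw [max_eq_left (by linarith)]
    have h1 := Real.sq_sqrt (show 0 ≤ β ^ 2 - (|x| - α) ^ 2 by nlinarith)
    refine ⟨Or.inr ⟨?_, h.le⟩, Or.inr ⟨?_, h.le⟩⟩
    · simp only; linarith
    · simp only; nlinarith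

lemma div_x0 {α β : ℝ} (hα : 0 < α) (hβ : 0 < β) {V : Set (ℝ × ℝ)} (hV : IsOpen V)
    (hSV : Stadium α β ⊆ V) {G : ℝ × ℝ → ℝ} (hG : ContDiffOn ℝ (⊤ : ℕ∞) G V)
    (h0 : ∀ p ∈ StadiumBoundary α β, G p = 0) :
    ∫ p in Stadium α β, pdx G p = 0 := by
  rw [div_x hα hβ hV hSV hG, ← intervalIntegral.integral_zero (a := -β) (b := β)]
  refine intervalIntegral.integral_congr fun y hy => ?_
  rw [uIcc_of_le (by linarith)] at hy
  simp only [h0 _ (bdry_x hα hy).1, h0 _ (bdry_x hα hy).2, sub_zero]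

lemma div_y0 {α β : ℝ} (hα : 0 < α) (hβ : 0 < β) {V : Set (ℝ × ℝ)} (hV : IsOpen V)
    (hSV : Stadium α β ⊆ V) {G : ℝ × ℝ → ℝ} (hG : ContDiffOn ℝ (⊤ : ℕ∞) G V)
    (h0 : ∀ p ∈ StadiumBoundary α β, G p = 0) :
    ∫ p in Stadium α β, pdy G p = 0 := by
  rw [div_y hα hβ hV hSV hG, ← intervalIntegral.integral_zero (a := -(α + β)) (b := α + β)]
  refine intervalIntegral.integral_congr fun x hx => ?_
  rw [uIcc_of_le (by linarith)] at hx
  simp [h0 _ (bdry_y hβ hx).1, h0 _ (bdry_y hβ hx).2]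

lemma smooth_fst {ψ : ℝ → ℝ} (hψ : ContDiff ℝ (⊤ : ℕ∞) ψ) (V : Set (ℝ × ℝ)) :
    ContDiffOn ℝ (⊤ : ℕ∞) (fun p : ℝ × ℝ => ψ p.1) V :=
  (hψ.comp contDiff_fst).contDiffOn

lemma smooth_deriv {ψ : ℝ → ℝ} (hψ : ContDiff ℝ (⊤ : ℕ∞) ψ) :
    ContDiff ℝ (⊤ : ℕ∞) (deriv ψ) := by
  have := contDiff_infty_iff_deriv.1 hψ
  exact this.2

lemma hasd {ψ : ℝ → ℝ} (hψ : ContDiff ℝ (⊤ : ℕ∞) ψ) (x : ℝ) :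
    HasDerivAt ψ (deriv ψ x) x :=
  (hψ.differentiable (by simp) x).hasDerivAt

lemma cont_int {α β : ℝ} (hα : 0 < α) (hβ : 0 < β) {g : ℝ × ℝ → ℝ}
    (hg : ContinuousOn g (Stadium α β)) : IntegrableOn g (Stadium α β) :=
  hg.integrableOn_compact (stadium_compact hα hβ)

lemma f_cont {α β : ℝ} (d : QMDatum α β) : ContinuousOn d.f (Stadium α β) := by
  obtain ⟨V, hV, hSV, hu⟩ := d.smooth
  have hx := smooth_pdx hV (smooth_pdx hV hu)
  have hy := smooth_pdy hV (smooth_pdy hV hu)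
  have h : ContinuousOn (fun p => -(pdx (pdx d.u) p) - pdy (pdy d.u) p - d.lam ^ 2 * d.u p)
      (Stadium α β) :=
    ((hx.continuousOn.neg.sub hy.continuousOn).sub
      (continuousOn_const.mul hu.continuousOn)).mono hSV
  exact h.congr fun p hp => (d.eqn p hp).symm

lemma u_cont {α β : ℝ} (d : QMDatum α β) : ContinuousOn d.u (Stadium α β) := by
  obtain ⟨V, hV, hSV, hu⟩ := d.smooth
  exact hu.continuousOn.mono hSV

lemma ux_cont {α β : ℝ} (d : QMDatum α β) : ContinuousOn (pdx d.u) (Stadium α β) := by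
  obtain ⟨V, hV, hSV, hu⟩ := d.smooth
  exact (smooth_pdx hV hu).continuousOn.mono hSV

lemma uy_cont {α β : ℝ} (d : QMDatum α β) : ContinuousOn (pdy d.u) (Stadium α β) := by
  obtain ⟨V, hV, hSV, hu⟩ := d.smooth
  exact (smooth_pdy hV hu).continuousOn.mono hSV

lemma energy {α β : ℝ} (hα : 0 < α) (hβ : 0 < β) (d : QMDatum α β)
    {ψ : ℝ → ℝ} (hψ : ContDiff ℝ (⊤ : ℕ∞) ψ) :
    ∫ p in Stadium α β, ψ p.1 * ((pdx d.u p) ^ 2 + (pdy d.u p) ^ 2) =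
    ∫ p in Stadium α β, (ψ p.1 * d.u p * (d.f p + d.lam ^ 2 * d.u p) +
      1 / 2 * deriv (deriv ψ) p.1 * (d.u p) ^ 2) := by
  have cu := u_cont d
  have cf := f_cont d
  have cx := ux_cont d
  have cy := uy_cont d
  have c0 : ContinuousOn (fun p : ℝ × ℝ => ψ p.1) (Stadium α β) :=
    (smooth_fst hψ _).continuousOn
  have c2 : ContinuousOn (fun p : ℝ × ℝ => deriv (deriv ψ) p.1) (Stadium α β) :=
    (smooth_fst (smooth_deriv (smooth_deriv hψ)) _).continuousOn
  obtain ⟨V, hV, hSV, hu⟩ := d.smooth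
  have hux := smooth_pdx hV hu
  have huy := smooth_pdy hV hu
  have hψ1 := smooth_deriv hψ
  have s0 := smooth_fst hψ V
  have s1 := smooth_fst hψ1 V
  set G1 : ℝ × ℝ → ℝ := fun p => ψ p.1 * d.u p * pdx d.u p - 1 / 2 * (deriv ψ p.1 * d.u p ^ 2)
    with hG1
  set G2 : ℝ × ℝ → ℝ := fun p => ψ p.1 * d.u p * pdy d.u p with hG2
  have S1 : ContDiffOn ℝ (⊤ : ℕ∞) G1 V :=
    ((s0.mul hu).mul hux).sub (contDiffOn_const.mul (s1.mul (hu.pow 2)))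
  have S2 : ContDiffOn ℝ (⊤ : ℕ∞) G2 V := (s0.mul hu).mul huy
  have e1 := div_x0 hα hβ hV hSV S1 (fun p hp => by simp [hG1, d.dirichlet p hp])
  have e2 := div_y0 hα hβ hV hSV S2 (fun p hp => by simp [hG2, d.dirichlet p hp])
  have i1 := cont_int hα hβ ((smooth_pdx hV S1).continuousOn.mono hSV)
  have i2 := cont_int hα hβ ((smooth_pdy hV S2).continuousOn.mono hSV)
  rw [← sub_eq_zero, ← integral_sub]
  · have e3 := integral_add i1 i2
    rw [e1, e2, add_zero] at e3
    rw [← e3]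
    refine setIntegral_congr_fun (stadium_compact hα hβ).measurableSet fun p hp => ?_
    have hp' := hSV hp
    have hf := d.eqn p hp
    have k1 : pdx G1 p = _ :=
      ((((hasd hψ p.1).mul (hasx hV hu hp')).mul (hasx hV hux hp')).sub
        (((hasd hψ1 p.1).mul ((hasx hV hu hp').pow 2)).const_mul (1 / 2))).deriv
    have k2 : pdy G2 p = _ := (((hasy hV hu hp').const_mul (ψ p.1)).mul (hasy hV huy hp')).deriv
    rw [k1, k2, ← hf, lap]
    simp
    ring
  · exact cont_int hα hβ (c0.mul ((cx.pow 2).add (cy.pow 2)))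
  · exact cont_int hα hβ (((c0.mul cu).mul (cf.add (continuousOn_const.mul cu))).add
      ((continuousOn_const.mul c2).mul (cu.pow 2)))

lemma poincare {α β : ℝ} (hα : 0 < α) (hβ : 0 < β) (d : QMDatum α β) :
    ∫ p in Stadium α β, (d.u p) ^ 2 ≤
      4 * (α + β) ^ 2 * ∫ p in Stadium α β, (pdx d.u p) ^ 2 := by
  have cu := u_cont d
  have cx := ux_cont d
  obtain ⟨V, hV, hSV, hu⟩ := d.smooth
  set G1 : ℝ × ℝ → ℝ := fun p => p.1 * d.u p ^ 2 with hG1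
  have S1 : ContDiffOn ℝ (⊤ : ℕ∞) G1 V := contDiff_fst.contDiffOn.mul (hu.pow 2)
  have e1 := div_x0 hα hβ hV hSV S1 (fun p hp => by simp [hG1, d.dirichlet p hp])
  have i1 := cont_int hα hβ ((smooth_pdx hV S1).continuousOn.mono hSV)
  have iu : IntegrableOn (fun p => d.u p ^ 2) (Stadium α β) := cont_int hα hβ (cu.pow 2)
  have ix : IntegrableOn (fun p => pdx d.u p ^ 2) (Stadium α β) := cont_int hα hβ (cx.pow 2)
  have key : ∫ p in Stadium α β, (1 / 2 * (d.u p) ^ 2 - 2 * (α + β) ^ 2 * (pdx d.u p) ^ 2) ≤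
      ∫ p in Stadium α β, pdx G1 p := by
    refine setIntegral_mono_on ((iu.const_mul _).sub (ix.const_mul _)) i1
      (stadium_compact hα hβ).measurableSet fun p hp => ?_
    have k1 : pdx G1 p = _ :=
      ((hasDerivAt_id p.1).mul ((hasx hV hu (hSV hp)).pow 2)).deriv
    rw [k1]
    have hb := ((mem_stadium_y hα hβ p.1 p.2).1 hp).1
    have hb2 : p.1 ^ 2 ≤ (α + β) ^ 2 := by nlinarith [hb.1, hb.2]
    simp
    nlinarith [sq_nonneg (d.u p + 2 * p.1 * pdx d.u p),
      mul_le_mul_of_nonneg_right hb2 (sq_nonneg (pdx d.u p))]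
  rw [e1, integral_sub (iu.const_mul _) (ix.const_mul _), integral_const_mul,
    integral_const_mul] at key
  linarith

lemma small_lam {α β : ℝ} (hα : 0 < α) (hβ : 0 < β) (d : QMDatum α β)
    (hl : 16 * (α + β) ^ 2 * d.lam ^ 2 ≤ 1) :
    ∫ p in Stadium α β, (d.u p) ^ 2 ≤
      32 * (α + β) ^ 4 * ∫ p in Stadium α β, (d.f p) ^ 2 := by
  have hP := poincare hα hβ d
  have hE := energy hα hβ d (ψ := fun _ => 1) contDiff_const
  have iu : IntegrableOn (fun p => d.u p ^ 2) (Stadium α β) := cont_int hα hβ ((u_cont d).pow 2)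
  have iff' : IntegrableOn (fun p => d.f p ^ 2) (Stadium α β) := cont_int hα hβ ((f_cont d).pow 2)
  have ix : IntegrableOn (fun p => pdx d.u p ^ 2) (Stadium α β) := cont_int hα hβ ((ux_cont d).pow 2)
  have iy : IntegrableOn (fun p => pdy d.u p ^ 2) (Stadium α β) := cont_int hα hβ ((uy_cont d).pow 2)
  have hA : 0 < (α + β) ^ 2 := by positivity
  have h1 : ∫ p in Stadium α β, (pdx d.u p) ^ 2 ≤
      ∫ p in Stadium α β, 1 * ((pdx d.u p) ^ 2 + (pdy d.u p) ^ 2) := by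
    refine setIntegral_mono_on ix ((ix.add iy).const_mul 1)
      (stadium_compact hα hβ).measurableSet fun p hp => ?_
    nlinarith [sq_nonneg (pdy d.u p)]
  have h2 : ∫ p in Stadium α β, (1 * d.u p * (d.f p + d.lam ^ 2 * d.u p) +
      1 / 2 * deriv (deriv fun _ => (1 : ℝ)) p.1 * (d.u p) ^ 2) ≤
      ∫ p in Stadium α β, ((d.lam ^ 2 + 1 / (16 * (α + β) ^ 2)) * (d.u p) ^ 2 +
        4 * (α + β) ^ 2 * (d.f p) ^ 2) := by
    refine setIntegral_mono_on ?_ ((iu.const_mul _).add (iff'.const_mul _))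
      (stadium_compact hα hβ).measurableSet fun p hp => ?_
    · simp only [deriv_const', one_mul, mul_zero, zero_mul, add_zero]
      exact cont_int hα hβ ((u_cont d).mul ((f_cont d).add (continuousOn_const.mul (u_cont d))))
    · have : d.u p * d.f p ≤ 1 / (16 * (α + β) ^ 2) * (d.u p) ^ 2 +
        4 * (α + β) ^ 2 * (d.f p) ^ 2 := by
        have h : 0 < α + β := by positivity
        have := sq_nonneg (d.u p / (4 * (α + β)) - 2 * (α + β) * d.f p)
        have e : (d.u p / (4 * (α + β)) - 2 * (α + β) * d.f p) ^ 2 =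
          1 / (16 * (α + β) ^ 2) * (d.u p) ^ 2 +
            4 * (α + β) ^ 2 * (d.f p) ^ 2 - d.u p * d.f p := by
          field_simp; ring
        linarith
      simp only [deriv_const', one_mul, mul_zero, zero_mul, add_zero]
      linarith
  rw [← hE, integral_add (iu.const_mul _) (iff'.const_mul _),
    integral_const_mul (d.lam ^ 2 + 1 / (16 * (α + β) ^ 2)),
    integral_const_mul (4 * (α + β) ^ 2)] at h2
  set U := ∫ p in Stadium α β, (d.u p) ^ 2
  set F := ∫ p in Stadium α β, (d.f p) ^ 2
  have hU : 0 ≤ U := integral_nonneg fun p => sq_nonneg _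
  have h3 := mul_le_mul_of_nonneg_left (h1.trans h2) (show 0 ≤ 4 * (α + β) ^ 2 by positivity)
  have h4 : 4 * (α + β) ^ 2 * ((d.lam ^ 2 + 1 / (16 * (α + β) ^ 2)) * U + 4 * (α + β) ^ 2 * F) =
    (16 * (α + β) ^ 2 * d.lam ^ 2) * U / 4 + U / 4 + 16 * (α + β) ^ 4 * F := by
    field_simp; ring
  nlinarith

lemma bd_x {α β : ℝ} (hα : 0 < α) (hβ : 0 < β) {V : Set (ℝ × ℝ)} (hV : IsOpen V)
    (hSV : Stadium α β ⊆ V) {G : ℝ × ℝ → ℝ} (hG : ContDiffOn ℝ (⊤ : ℕ∞) G V)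
    (h0 : ∀ p : ℝ × ℝ, p.1 ≤ α → G p = 0) :
    ∫ p in Stadium α β, pdx G p = ∫ θ in (-(π / 2))..(π / 2),
      G (α + β * cos θ, β * sin θ) * (β * cos θ) := by
  have hc := hG.continuousOn.mono hSV
  rw [div_x hα hβ hV hSV hG]
  have e1 : ∫ y in (-β)..β, (G (α + √(β ^ 2 - y ^ 2), y) - G (-(α + √(β ^ 2 - y ^ 2)), y)) =
      ∫ y in (-β)..β, G (α + √(β ^ 2 - y ^ 2), y) := by
    refine intervalIntegral.integral_congr fun y hy => ?_
    have := Real.sqrt_nonneg (β ^ 2 - y ^ 2)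
    rw [h0 (-(α + √(β ^ 2 - y ^ 2)), y) (by linarith), sub_zero]
  have hpi : -(π / 2) ≤ π / 2 := by linarith [pi_pos]
  have e2 := intervalIntegral.integral_comp_mul_deriv' (a := -(π / 2)) (b := π / 2)
    (f := fun θ => β * sin θ) (f' := fun θ => β * cos θ)
    (g := fun y => G (α + √(β ^ 2 - y ^ 2), y))
    (fun θ _ => (hasDerivAt_sin θ).const_mul β) (by fun_prop) (by
      refine ContinuousOn.comp hc (f := fun y => (α + √(β ^ 2 - y ^ 2), y))
        (Continuous.continuousOn (by fun_prop)) ?_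
      rintro _ ⟨θ, hθ, rfl⟩
      refine (mem_stadium_x hα hβ _ _).2 ⟨?_, ?_, le_refl _⟩
      · constructor <;> simp only <;> nlinarith [neg_one_le_sin θ, sin_le_one θ]
      · have := Real.sqrt_nonneg (β ^ 2 - (β * sin θ) ^ 2)
        linarith)
  simp only [sin_neg, sin_pi_div_two, mul_neg, mul_one] at e2
  rw [e1, ← e2]
  refine intervalIntegral.integral_congr fun θ hθ => ?_
  rw [uIcc_of_le hpi] at hθ
  have hcos := cos_nonneg_of_mem_Icc hθ
  have : √(β ^ 2 - (β * sin θ) ^ 2) = β * cos θ := by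
    rw [show β ^ 2 - (β * sin θ) ^ 2 = (β * cos θ) ^ 2 by nlinarith [sin_sq_add_cos_sq θ]]
    exact Real.sqrt_sq (by positivity)
  simp only [Function.comp, this]

lemma hgt_cont (α β : ℝ) : Continuous (hgt α β) := by
  unfold hgt; fun_prop

lemma bd_y {α β : ℝ} (hα : 0 < α) (hβ : 0 < β) {V : Set (ℝ × ℝ)} (hV : IsOpen V)
    (hSV : Stadium α β ⊆ V) {G : ℝ × ℝ → ℝ} (hG : ContDiffOn ℝ (⊤ : ℕ∞) G V)
    (h0 : ∀ p : ℝ × ℝ, p.1 ≤ α → G p = 0) :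
    ∫ p in Stadium α β, pdy G p = ∫ θ in (-(π / 2))..(π / 2),
      G (α + β * cos θ, β * sin θ) * (β * sin θ) := by
  have hc := hG.continuousOn.mono hSV
  have hh := hgt_cont α β
  rw [div_y hα hβ hV hSV hG]
  have cK : ContinuousOn (fun x => G (x, hgt α β x) - G (x, -(hgt α β x)))
      (Icc (-(α + β)) (α + β)) := by
    refine ContinuousOn.sub ?_ ?_
    · refine ContinuousOn.comp hc (f := fun x => (x, hgt α β x))
        (Continuous.continuousOn (by fun_prop)) fun x hx => ?_
      have : 0 ≤ hgt α β x := Real.sqrt_nonneg _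
      exact (mem_stadium_y hα hβ _ _).2 ⟨hx, by linarith, le_refl _⟩
    · refine ContinuousOn.comp hc (f := fun x => (x, -(hgt α β x)))
        (Continuous.continuousOn (by fun_prop)) fun x hx => ?_
      have : 0 ≤ hgt α β x := Real.sqrt_nonneg _
      exact (mem_stadium_y hα hβ _ _).2 ⟨hx, le_refl _, by linarith⟩
  have e1 : ∫ x in (-(α + β))..α, (G (x, hgt α β x) - G (x, -(hgt α β x))) = 0 := by
    rw [← intervalIntegral.integral_zero (a := -(α + β)) (b := α)]
    refine intervalIntegral.integral_congr fun x hx => ?_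
    rw [uIcc_of_le (by linarith)] at hx
    rw [h0 _ hx.2, h0 _ hx.2, sub_zero]
  rw [← intervalIntegral.integral_add_adjacent_intervals (b := α)
    (ContinuousOn.intervalIntegrable (cK.mono (by
      rw [uIcc_of_le (by linarith)]; exact Icc_subset_Icc_right (by linarith))))
    (ContinuousOn.intervalIntegrable (cK.mono (by
      rw [uIcc_of_le (by linarith)]; exact Icc_subset_Icc_left (by linarith)))), e1, zero_add]
  have hpi : (0 : ℝ) ≤ π / 2 := by linarith [pi_pos]
  have e2 := intervalIntegral.integral_comp_mul_deriv' (a := π / 2) (b := 0)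
    (f := fun θ => α + β * cos θ) (f' := fun θ => β * -sin θ)
    (g := fun x => G (x, hgt α β x) - G (x, -(hgt α β x)))
    (fun θ _ => ((hasDerivAt_cos θ).const_mul β).const_add α) (by fun_prop) (cK.mono (by
      rintro _ ⟨θ, hθ, rfl⟩
      constructor <;> simp only <;> nlinarith [neg_one_le_cos θ, cos_le_one θ]))
  simp only [cos_zero, cos_pi_div_two, mul_zero, add_zero, mul_one] at e2
  rw [← e2, intervalIntegral.integral_symm, ← intervalIntegral.integral_neg]
  have hP : ∀ θ ∈ Icc (-(π / 2)) (π / 2), (α + β * cos θ, β * sin θ) ∈ Stadium α β := by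
    intro θ hθ
    have hcos := cos_nonneg_of_mem_Icc hθ
    rw [mem_stadium hα hβ]
    refine ⟨?_, Or.inr ?_⟩
    · rw [abs_mul, abs_of_pos hβ]; nlinarith [abs_sin_le_one θ]
    · rw [abs_of_nonneg (by positivity)]
      nlinarith [sin_sq_add_cos_sq θ]
  have cL : ContinuousOn (fun θ => G (α + β * cos θ, β * sin θ) * (β * sin θ))
      (Icc (-(π / 2)) (π / 2)) :=
    (ContinuousOn.comp hc (f := fun θ => (α + β * cos θ, β * sin θ))
      (Continuous.continuousOn (by fun_prop)) hP).mul (Continuous.continuousOn (by fun_prop))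
  have j1 : IntervalIntegrable (fun θ => G (α + β * cos θ, β * sin θ) * (β * sin θ)) volume
      (-(π / 2)) 0 := ContinuousOn.intervalIntegrable (cL.mono (by
      rw [uIcc_of_le (by linarith)]; exact Icc_subset_Icc_right (by linarith)))
  have j2 : IntervalIntegrable (fun θ => G (α + β * cos θ, β * sin θ) * (β * sin θ)) volume
      0 (π / 2) := ContinuousOn.intervalIntegrable (cL.mono (by
      rw [uIcc_of_le (by linarith)]; exact Icc_subset_Icc_left (by linarith)))
  have j3 : IntervalIntegrable
      (fun θ => G (α + β * cos (-θ), β * sin (-θ)) * (β * sin (-θ))) volume 0 (π / 2) := by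
    refine ContinuousOn.intervalIntegrable ?_
    refine ContinuousOn.comp cL (f := fun θ => -θ) (Continuous.continuousOn (by fun_prop)) ?_
    intro θ hθ
    rw [uIcc_of_le hpi] at hθ
    exact ⟨by linarith [hθ.2], by linarith [hθ.1]⟩
  rw [← intervalIntegral.integral_add_adjacent_intervals j1 j2]
  have e3 := intervalIntegral.integral_comp_neg (a := 0) (b := π / 2)
    (fun θ => G (α + β * cos θ, β * sin θ) * (β * sin θ))
  rw [neg_zero] at e3
  rw [← e3, ← intervalIntegral.integral_add j3 j2]
  refine intervalIntegral.integral_congr fun θ hθ => ?_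
  rw [uIcc_of_le hpi] at hθ
  have hcos := cos_nonneg_of_mem_Icc (x := θ) ⟨by linarith [hθ.1], hθ.2⟩
  have hsin := sin_nonneg_of_nonneg_of_le_pi hθ.1 (by linarith [hθ.2])
  have : hgt α β (α + β * cos θ) = β * sin θ := by
    unfold hgt
    have hbc : 0 ≤ β * cos θ := by positivity
    rw [abs_of_nonneg (by positivity), add_sub_cancel_left, max_eq_left hbc,
      show β ^ 2 - (β * cos θ) ^ 2 = (β * sin θ) ^ 2 by nlinarith [sin_sq_add_cos_sq θ]]
    exact Real.sqrt_sq (by positivity)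
  simp only [Function.comp, this, cos_neg, sin_neg, mul_neg]
  ring

lemma tang {α β : ℝ} (hα : 0 < α) (hβ : 0 < β) (d : QMDatum α β) {θ : ℝ}
    (hθ : θ ∈ Ioo (-(π / 2)) (π / 2)) :
    sin θ * pdx d.u (α + β * cos θ, β * sin θ) = cos θ * pdy d.u (α + β * cos θ, β * sin θ) := by
  obtain ⟨V, hV, hSV, hu⟩ := d.smooth
  have hcos0 := cos_pos_of_mem_Ioo hθ
  have hP : (α + β * cos θ, β * sin θ) ∈ Stadium α β := by
    rw [mem_stadium hα hβ]
    refine ⟨?_, Or.inr ?_⟩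
    · rw [abs_mul, abs_of_pos hβ]; nlinarith [abs_sin_le_one θ]
    · rw [abs_of_nonneg (by positivity)]
      nlinarith [sin_sq_add_cos_sq θ]
  have hp := hSV hP
  rw [pdx_eq hV hu hp, pdy_eq hV hu hp]
  set p : ℝ × ℝ := (α + β * cos θ, β * sin θ)
  have h1 : HasFDerivAt d.u (fderiv ℝ d.u p) p :=
    ((hu.contDiffAt (hV.mem_nhds hp)).differentiableAt (by simp)).hasFDerivAt
  have h2 : HasDerivAt (fun t : ℝ => (α + β * cos t, β * sin t)) (β * -sin θ, β * cos θ) θ :=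
    (((hasDerivAt_cos θ).const_mul β).const_add α).prodMk ((hasDerivAt_sin θ).const_mul β)
  have h3 := HasFDerivAt.comp_hasDerivAt (f := fun t : ℝ => (α + β * cos t, β * sin t)) θ h1 h2
  have h4 : (d.u ∘ fun t : ℝ => (α + β * cos t, β * sin t)) =ᶠ[nhds θ] fun _ => (0 : ℝ) := by
    filter_upwards [isOpen_Ioo.mem_nhds hθ] with t ht
    have hcos := cos_pos_of_mem_Ioo ht
    refine d.dirichlet _ (Or.inr ?_)
    simp only [mem_ofPred_eq]
    rw [abs_of_nonneg (by positivity)]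
    exact ⟨by nlinarith [sin_sq_add_cos_sq t], by nlinarith⟩
  have h5 := (h3.congr_of_eventuallyEq h4.symm).unique (hasDerivAt_const θ (0 : ℝ))
  have h6 : ((β * -sin θ, β * cos θ) : ℝ × ℝ) =
      (β * -sin θ) • ((1, 0) : ℝ × ℝ) + (β * cos θ) • ((0, 1) : ℝ × ℝ) := by
    ext <;> simp
  rw [h6, map_add, map_smul, map_smul, smul_eq_mul, smul_eq_mul] at h5
  have : β * (sin θ * (fderiv ℝ d.u p) (1, 0)) = β * (cos θ * (fderiv ℝ d.u p) (0, 1)) := by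
    linarith
  exact mul_left_cancel₀ hβ.ne' this

lemma rellich {α β : ℝ} (hα : 0 < α) (hβ : 0 < β) (d : QMDatum α β)
    {φ : ℝ → ℝ} (hφ : ContDiff ℝ (⊤ : ℕ∞) φ) (h0 : ∀ x ≤ α, φ x = 0) :
    bdryIntW α β (fun p n => φ p.1 * pdx d.u p * nderiv d.u p n) =
    ∫ p in Stadium α β, (deriv φ p.1 * ((pdx d.u p) ^ 2 - (pdy d.u p) ^ 2 +
      d.lam ^ 2 * (d.u p) ^ 2) - 2 * φ p.1 * pdx d.u p * d.f p) := by
  have htang := fun θ => @tang α β hα hβ d θ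
  have hdir := d.dirichlet
  obtain ⟨V, hV, hSV, hu⟩ := d.smooth
  have hux := smooth_pdx hV hu
  have huy := smooth_pdy hV hu
  have s0 := smooth_fst hφ V
  set G1 : ℝ × ℝ → ℝ := fun p => φ p.1 * ((pdx d.u p) ^ 2 - (pdy d.u p) ^ 2 +
      d.lam ^ 2 * (d.u p) ^ 2) with hG1
  set G2 : ℝ × ℝ → ℝ := fun p => 2 * φ p.1 * (pdx d.u p * pdy d.u p) with hG2
  have S1 : ContDiffOn ℝ (⊤ : ℕ∞) G1 V :=
    s0.mul (((hux.pow 2).sub (huy.pow 2)).add (contDiffOn_const.mul (hu.pow 2)))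
  have S2 : ContDiffOn ℝ (⊤ : ℕ∞) G2 V := (contDiffOn_const.mul s0).mul (hux.mul huy)
  have z1 : ∀ p : ℝ × ℝ, p.1 ≤ α → G1 p = 0 := fun p hp => by simp [hG1, h0 _ hp]
  have z2 : ∀ p : ℝ × ℝ, p.1 ≤ α → G2 p = 0 := fun p hp => by simp [hG2, h0 _ hp]
  have e1 := bd_x hα hβ hV hSV S1 z1
  have e2 := bd_y hα hβ hV hSV S2 z2
  have i1 := cont_int hα hβ ((smooth_pdx hV S1).continuousOn.mono hSV)
  have i2 := cont_int hα hβ ((smooth_pdy hV S2).continuousOn.mono hSV)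
  have e3 := integral_add i1 i2
  have e4 : ∫ p in Stadium α β, (deriv φ p.1 * ((pdx d.u p) ^ 2 - (pdy d.u p) ^ 2 +
      d.lam ^ 2 * (d.u p) ^ 2) - 2 * φ p.1 * pdx d.u p * d.f p) =
      ∫ p in Stadium α β, (pdx G1 p + pdy G2 p) := by
    refine setIntegral_congr_fun (stadium_compact hα hβ).measurableSet fun p hp => ?_
    have hp' := hSV hp
    have hf := d.eqn p hp
    have k1 : pdx G1 p = _ :=
      ((hasd hφ p.1).mul ((((hasx hV hux hp').pow 2).sub ((hasx hV huy hp').pow 2)).add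
        (((hasx hV hu hp').pow 2).const_mul (d.lam ^ 2)))).deriv
    have k2 : pdy G2 p = _ :=
      (((hasy hV hux hp').mul (hasy hV huy hp')).const_mul (2 * φ p.1)).deriv
    rw [k1, k2, ← hf, lap, pd_comm hV hu hp']
    simp
    ring
  have hpi : -(π / 2) ≤ π / 2 := by linarith [pi_pos]
  have hP : ∀ θ ∈ Icc (-(π / 2)) (π / 2), (α + β * cos θ, β * sin θ) ∈ Stadium α β := by
    intro θ hθ
    have hcos := cos_nonneg_of_mem_Icc hθ
    rw [mem_stadium hα hβ]
    refine ⟨?_, Or.inr ?_⟩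
    · rw [abs_mul, abs_of_pos hβ]; nlinarith [abs_sin_le_one θ]
    · rw [abs_of_nonneg (by positivity)]
      nlinarith [sin_sq_add_cos_sq θ]
  have cP : Continuous (fun θ => (α + β * cos θ, β * sin θ)) := by fun_prop
  have c1 : ContinuousOn (fun θ => G1 (α + β * cos θ, β * sin θ) * (β * cos θ))
      (uIcc (-(π / 2)) (π / 2)) := by
    rw [uIcc_of_le hpi]
    exact (ContinuousOn.comp (S1.continuousOn.mono hSV) cP.continuousOn hP).mul
      (Continuous.continuousOn (by fun_prop))
  have c2 : ContinuousOn (fun θ => G2 (α + β * cos θ, β * sin θ) * (β * sin θ))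
      (uIcc (-(π / 2)) (π / 2)) := by
    rw [uIcc_of_le hpi]
    exact (ContinuousOn.comp (S2.continuousOn.mono hSV) cP.continuousOn hP).mul
      (Continuous.continuousOn (by fun_prop))
  rw [e4]
  rw [e1, e2] at e3
  rw [e3, ← intervalIntegral.integral_add c1.intervalIntegrable c2.intervalIntegrable, bdryIntW,
    ← intervalIntegral.integral_const_mul]
  rw [intervalIntegral.integral_of_le hpi, intervalIntegral.integral_of_le hpi,
    integral_Ioc_eq_integral_Ioo, integral_Ioc_eq_integral_Ioo]
  refine setIntegral_congr_fun measurableSet_Ioo fun θ hθ => ?_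
  have ht := htang θ hθ
  have hcos := cos_pos_of_mem_Ioo hθ
  have hu0 : d.u (α + β * cos θ, β * sin θ) = 0 := by
    refine hdir _ (Or.inr ?_)
    simp only [mem_ofPred_eq]
    rw [abs_of_nonneg (by positivity)]
    exact ⟨by nlinarith [sin_sq_add_cos_sq θ], by nlinarith⟩
  have hz : φ (-(α + β * cos θ)) = 0 := h0 _ (by nlinarith)
  simp only [hG1, hG2, nderiv, hz, hu0]
  linear_combination (-β) * φ (α + β * cos θ) * pdy d.u (α + β * cos θ, β * sin θ) * ht

/-- Region III estimate: for `φ` smooth, `0 ≤ φ ≤ 1`, supported in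
`{x ≥ α + β/4}`, equal to `1` on `{x ≥ α + β/2}`, with `φ' ≥ 0`, and for every `ε > 0`,
there is `C > 0` such that every real Dirichlet quasimode datum satisfies
`|∫_{∂S ∩ W} φ(x)(∂_x u)(∂_N u) dl| ≤ C λ² ‖u‖²_{L²(W)} + C ‖f‖²_{L²(S)} + ε ∫_S (∂_x u)²`. -/
theorem stmt12 (α β : ℝ) (hα : 0 < α) (hβ : 0 < β)
    (φ : ℝ → ℝ) (hφ : ContDiff ℝ (⊤ : ℕ∞) φ)
    (hφ01 : ∀ x, 0 ≤ φ x ∧ φ x ≤ 1)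
    (hφsupp : Function.support φ ⊆ {x : ℝ | α + β / 4 ≤ x})
    (hφ1 : ∀ x, α + β / 2 ≤ x → φ x = 1)
    (hφ' : ∀ x, 0 ≤ deriv φ x) :
    ∀ ε > 0, ∃ C > 0, ∀ d : QMDatum α β,
      |bdryIntW α β (fun p n => φ p.1 * pdx d.u p * nderiv d.u p n)| ≤
        C * d.lam ^ 2 * (∫ p in Wings α β, (d.u p) ^ 2) +
        C * (∫ p in Stadium α β, (d.f p) ^ 2) +
        ε * (∫ p in Stadium α β, (pdx d.u p) ^ 2) := by
  intro ε hε
  have hcl : ∀ x, x < α + β / 4 → φ x = 0 := fun x hx => by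
    by_contra h
    have := hφsupp (Function.mem_support.2 h)
    simp only [mem_ofPred_eq] at this
    linarith
  have hz0 : ∀ x ≤ α, φ x = 0 := fun x hx => hcl x (by linarith)
  have hev : ∀ x ≤ α, φ =ᶠ[nhds x] fun _ => 0 := fun x hx => by
    filter_upwards [isOpen_Iio.mem_nhds (show x ∈ Iio (α + β / 4) by
      rw [mem_Iio]; linarith)] with y hy using hcl y hy
  have hz1 : ∀ x ≤ α, deriv φ x = 0 := fun x hx => by
    rw [(hev x hx).deriv_eq]; simp
  have hz3 : ∀ x ≤ α, deriv (deriv (deriv φ)) x = 0 := fun x hx => by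
    rw [(hev x hx).deriv.deriv.deriv_eq]; simp
  have s1 := smooth_deriv hφ
  have s3 := smooth_deriv (smooth_deriv s1)
  obtain ⟨M1, hM1⟩ := (isCompact_Icc (a := -(α + β)) (b := α + β)).exists_bound_of_continuousOn
    s1.continuous.continuousOn
  obtain ⟨M3, hM3⟩ := (isCompact_Icc (a := -(α + β)) (b := α + β)).exists_bound_of_continuousOn
    s3.continuous.continuousOn
  obtain ⟨M, hM⟩ : ∃ M, M = |M1| + |M3| + 1 := ⟨_, rfl⟩
  have hMp : 0 < M := by rw [hM]; positivity
  obtain ⟨A, hA⟩ : ∃ A, A = α + β := ⟨_, rfl⟩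
  have hAp : 0 < A := by rw [hA]; positivity
  have hεi : 0 < 1 / ε := by positivity
  refine ⟨2 * M + 16 * A ^ 2 * M + 32 * A ^ 4 * M + M / 2 + 1 / ε, by positivity, fun d => ?_⟩
  have hmS := (stadium_compact hα hβ).measurableSet
  have hmW := wings_meas α β
  have hWS : Wings α β ⊆ Stadium α β := subset_union_right
  have cu := u_cont d
  have cf := f_cont d
  have cx := ux_cont d
  have cy := uy_cont d
  have c0 : ContinuousOn (fun p : ℝ × ℝ => φ p.1) (Stadium α β) := (smooth_fst hφ _).continuousOn
  have c1 : ContinuousOn (fun p : ℝ × ℝ => deriv φ p.1) (Stadium α β) :=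
    (smooth_fst s1 _).continuousOn
  have c3 : ContinuousOn (fun p : ℝ × ℝ => deriv (deriv (deriv φ)) p.1) (Stadium α β) :=
    (smooth_fst s3 _).continuousOn
  have iu : IntegrableOn (fun p => d.u p ^ 2) (Stadium α β) := cont_int hα hβ (cu.pow 2)
  have iF : IntegrableOn (fun p => d.f p ^ 2) (Stadium α β) := cont_int hα hβ (cf.pow 2)
  have ix : IntegrableOn (fun p => pdx d.u p ^ 2) (Stadium α β) := cont_int hα hβ (cx.pow 2)
  have iE : IntegrableOn (fun p => deriv φ p.1 * (pdx d.u p ^ 2 + pdy d.u p ^ 2)) (Stadium α β) :=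
    cont_int hα hβ (c1.mul ((cx.pow 2).add (cy.pow 2)))
  have iL : IntegrableOn (fun p => d.lam ^ 2 * (deriv φ p.1 * d.u p ^ 2)) (Stadium α β) :=
    cont_int hα hβ (continuousOn_const.mul (c1.mul (cu.pow 2)))
  have iG : IntegrableOn (fun p => deriv φ p.1 * d.u p * (d.f p + d.lam ^ 2 * d.u p) +
      1 / 2 * deriv (deriv (deriv φ)) p.1 * d.u p ^ 2) (Stadium α β) :=
    cont_int hα hβ (((c1.mul cu).mul (cf.add (continuousOn_const.mul cu))).add
      ((continuousOn_const.mul c3).mul (cu.pow 2)))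
  have iB : IntegrableOn (fun p => deriv φ p.1 * ((pdx d.u p) ^ 2 - (pdy d.u p) ^ 2 +
      d.lam ^ 2 * (d.u p) ^ 2) - 2 * φ p.1 * pdx d.u p * d.f p) (Stadium α β) :=
    cont_int hα hβ ((c1.mul (((cx.pow 2).sub (cy.pow 2)).add
      (continuousOn_const.mul (cu.pow 2)))).sub
      (((continuousOn_const.mul c0).mul cx).mul cf))
  have hEn := energy hα hβ d s1
  have iE2 : IntegrableOn (fun p => deriv φ p.1 * (pdx d.u p ^ 2 + pdy d.u p ^ 2) +
      d.lam ^ 2 * (deriv φ p.1 * d.u p ^ 2)) (Stadium α β) := iE.add iL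
  have iE3 : IntegrableOn (fun p => deriv φ p.1 * (pdx d.u p ^ 2 + pdy d.u p ^ 2) +
      d.lam ^ 2 * (deriv φ p.1 * d.u p ^ 2) + ε * pdx d.u p ^ 2) (Stadium α β) :=
    iE2.add (ix.const_mul ε)
  have b1 : |bdryIntW α β (fun p n => φ p.1 * pdx d.u p * nderiv d.u p n)| ≤
      (∫ p in Stadium α β, deriv φ p.1 * (pdx d.u p ^ 2 + pdy d.u p ^ 2)) +
      (∫ p in Stadium α β, d.lam ^ 2 * (deriv φ p.1 * d.u p ^ 2)) +
      ε * (∫ p in Stadium α β, (pdx d.u p) ^ 2) +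
      1 / ε * (∫ p in Stadium α β, (d.f p) ^ 2) := by
    rw [rellich hα hβ d hφ hz0]
    refine (abs_integral_le_integral_abs).trans ?_
    rw [← integral_const_mul, ← integral_const_mul, ← integral_add iE iL,
      ← integral_add iE2 (ix.const_mul ε), ← integral_add iE3 (iF.const_mul (1 / ε))]
    refine setIntegral_mono_on iB.abs (iE3.add (iF.const_mul (1 / ε))) hmS fun p hp => ?_
    have hψ := hφ' p.1
    obtain ⟨q0, q1⟩ := hφ01 p.1
    generalize pdx d.u p = X
    generalize pdy d.u p = Y
    generalize d.f p = f
    generalize deriv φ p.1 = ψ at *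
    generalize φ p.1 = q at *
    have t1 : |2 * q * X * f| ≤ ε * X ^ 2 + 1 / ε * f ^ 2 := by
      have r1 : |2 * q * X * f| ≤ 2 * (|X| * |f|) := by
        rw [abs_mul, abs_mul, abs_mul, abs_of_nonneg q0, abs_two]
        nlinarith [mul_nonneg (abs_nonneg X) (abs_nonneg f)]
      have r2 : 0 ≤ 1 / ε * (ε * |X| - |f|) ^ 2 := by positivity
      have r3 : 1 / ε * (ε * |X| - |f|) ^ 2 = ε * X ^ 2 + 1 / ε * f ^ 2 - 2 * (|X| * |f|) := by
        rw [← sq_abs X, ← sq_abs f]; field_simp; ring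
      linarith
    obtain ⟨t2, t3⟩ := abs_le.1 t1
    have m1 := mul_nonneg hψ (sq_nonneg X)
    have m2 := mul_nonneg hψ (sq_nonneg Y)
    have m3 := mul_nonneg (sq_nonneg d.lam) (mul_nonneg hψ (sq_nonneg (d.u p)))
    rw [abs_le]
    constructor <;> nlinarith
  rw [hEn, ← integral_add iG iL] at b1
  have b2 : ∫ p in Stadium α β, (deriv φ p.1 * d.u p * (d.f p + d.lam ^ 2 * d.u p) +
      1 / 2 * deriv (deriv (deriv φ)) p.1 * d.u p ^ 2 +
      d.lam ^ 2 * (deriv φ p.1 * d.u p ^ 2)) =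
    ∫ p in Wings α β, (deriv φ p.1 * d.u p * (d.f p + d.lam ^ 2 * d.u p) +
      1 / 2 * deriv (deriv (deriv φ)) p.1 * d.u p ^ 2 +
      d.lam ^ 2 * (deriv φ p.1 * d.u p ^ 2)) := by
    refine setIntegral_eq_of_subset_of_forall_sdiff_eq_zero hmS hWS fun p hp => ?_
    have hx : p.1 ≤ α := by
      rcases hp.1 with h | h
      · exact h.1.2
      · exact absurd h hp.2
    rw [hz1 _ hx, hz3 _ hx]; ring
  have b3 : ∫ p in Wings α β, (deriv φ p.1 * d.u p * (d.f p + d.lam ^ 2 * d.u p) +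
      1 / 2 * deriv (deriv (deriv φ)) p.1 * d.u p ^ 2 +
      d.lam ^ 2 * (deriv φ p.1 * d.u p ^ 2)) ≤
      ∫ p in Wings α β, ((M + 2 * M * d.lam ^ 2) * d.u p ^ 2 + M / 2 * d.f p ^ 2) := by
    refine setIntegral_mono_on ((iG.add iL).mono_set hWS)
      (((iu.mono_set hWS).const_mul _).add ((iF.mono_set hWS).const_mul _)) hmW fun p hp => ?_
    have hb := ((mem_stadium_y hα hβ p.1 p.2).1 (hWS hp)).1
    have n1 := hM1 _ hb
    have n3 := hM3 _ hb
    rw [Real.norm_eq_abs] at n1 n3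
    have hψ := hφ' p.1
    have k1 : deriv φ p.1 ≤ M := by
      linarith [le_abs_self (deriv φ p.1), le_abs_self M1, abs_nonneg M3]
    have k3 : deriv (deriv (deriv φ)) p.1 ≤ M := by
      linarith [le_abs_self (deriv (deriv (deriv φ)) p.1), le_abs_self M3, abs_nonneg M1]
    generalize deriv (deriv (deriv φ)) p.1 = χ at *
    generalize deriv φ p.1 = ψ at *
    generalize d.f p = f
    generalize d.u p = u
    have a1 : ψ * (u * f) ≤ M * (u ^ 2 / 2 + f ^ 2 / 2) := by
      have r1 : ψ * (u * f) ≤ ψ * (u ^ 2 / 2 + f ^ 2 / 2) :=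
        mul_le_mul_of_nonneg_left (by nlinarith [sq_nonneg (u - f)]) hψ
      exact r1.trans (mul_le_mul_of_nonneg_right k1 (by positivity))
    have a2 : ψ * (d.lam ^ 2 * u ^ 2) ≤ M * (d.lam ^ 2 * u ^ 2) :=
      mul_le_mul_of_nonneg_right k1 (by positivity)
    have a3 : χ * u ^ 2 ≤ M * u ^ 2 := mul_le_mul_of_nonneg_right k3 (by positivity)
    nlinarith
  rw [integral_add ((iu.mono_set hWS).const_mul _) ((iF.mono_set hWS).const_mul _),
    integral_const_mul, integral_const_mul] at b3
  have b4 : ∫ p in Wings α β, d.f p ^ 2 ≤ ∫ p in Stadium α β, d.f p ^ 2 :=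
    setIntegral_mono_set iF (Eventually.of_forall fun p => sq_nonneg _) hWS.eventuallyLE
  have b5 : ∫ p in Wings α β, d.u p ^ 2 ≤ ∫ p in Stadium α β, d.u p ^ 2 :=
    setIntegral_mono_set iu (Eventually.of_forall fun p => sq_nonneg _) hWS.eventuallyLE
  have U0 : 0 ≤ ∫ p in Wings α β, d.u p ^ 2 := integral_nonneg fun p => sq_nonneg _
  have F0 : 0 ≤ ∫ p in Stadium α β, d.f p ^ 2 := integral_nonneg fun p => sq_nonneg _
  have hsm := small_lam hα hβ d
  rw [← hA] at hsm
  rw [b2] at b1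
  generalize (∫ p in Wings α β, d.u p ^ 2) = U at *
  generalize (∫ p in Stadium α β, d.u p ^ 2) = US at *
  generalize (∫ p in Stadium α β, d.f p ^ 2) = F at *
  generalize (∫ p in Wings α β, d.f p ^ 2) = FW at *
  have b6 : U ≤ 16 * A ^ 2 * (d.lam ^ 2 * U) + 32 * A ^ 4 * F := by
    have p1 : 0 ≤ 16 * A ^ 2 * (d.lam ^ 2 * U) := by positivity
    have p2 : 0 ≤ 32 * A ^ 4 * F := by positivity
    rcases le_total (16 * A ^ 2 * d.lam ^ 2) 1 with h | h
    · linarith [hsm h]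
    · nlinarith
  have b7 := mul_le_mul_of_nonneg_left b6 hMp.le
  have b8 := mul_le_mul_of_nonneg_left b4 (show 0 ≤ M / 2 by positivity)
  have p1 : 0 ≤ (32 * A ^ 4 * M + M / 2 + 1 / ε) * (d.lam ^ 2 * U) := by positivity
  have p2 : 0 ≤ (2 * M + 16 * A ^ 2 * M) * F := by positivity
  linarith
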